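/- In the noncommutative polynomial ring ℍ[x,y] over the quaternions, let p = XY − YX and g = X²Y + Y²X − 2XYX. Then g is not the product of p and a linear polynomial on either side: there do not exist quaternions a, b, c such that g = p · ((a⊗1)·X + (b⊗1)·Y + (c⊗1)) or g = ((a⊗1)·X + (b⊗1)·Y + (c⊗1)) · p. -/

import Mathlib

open TensorProduct

set_option synthInstance.maxHeartbeats 1000000
set_option maxHeartbeats 1000000

/-- The noncommutative polynomial ring ℍ[x,y] over the quaternions. -/
noncomputable abbrev QuatPoly : Type :=
  Quaternion ℝ ⊗[ℝ] FreeAlgebra ℝ (Fin 2)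

/-- The variable X. -/
noncomputable def QuatPoly.X : QuatPoly := (1 : Quaternion ℝ) ⊗ₜ[ℝ] FreeAlgebra.ι ℝ (0 : Fin 2)

/-- The variable Y. -/
noncomputable def QuatPoly.Y : QuatPoly := (1 : Quaternion ℝ) ⊗ₜ[ℝ] FreeAlgebra.ι ℝ (1 : Fin 2)

/-- Embedding of a quaternion coefficient. -/
noncomputable def QuatPoly.coeff (q : Quaternion ℝ) : QuatPoly :=
  q ⊗ₜ[ℝ] (1 : FreeAlgebra ℝ (Fin 2))

/-- Evaluation at the commuting point `X = 1`, `Y = 2`. -/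
noncomputable def evalOneTwo : QuatPoly →ₐ[ℝ] Quaternion ℝ :=
  Algebra.TensorProduct.lift (AlgHom.id ℝ (Quaternion ℝ))
    ((Algebra.ofId ℝ (Quaternion ℝ)).comp (FreeAlgebra.lift ℝ ![(1 : ℝ), 2]))
    (fun x y => Algebra.commute_algebraMap_right (FreeAlgebra.lift ℝ ![(1 : ℝ), 2] y) x)

theorem evalOneTwo_X : evalOneTwo QuatPoly.X = 1 := by
  refine (Algebra.TensorProduct.lift_tmul _ _ _ _ _).trans ?_
  simp

theorem evalOneTwo_Y : evalOneTwo QuatPoly.Y = 2 := by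
  refine (Algebra.TensorProduct.lift_tmul _ _ _ _ _).trans ?_
  simp
  rfl

theorem stmt_13 :
    ¬ ∃ a b c : Quaternion ℝ,
      (QuatPoly.X ^ 2 * QuatPoly.Y + QuatPoly.Y ^ 2 * QuatPoly.X -
          2 * (QuatPoly.X * QuatPoly.Y * QuatPoly.X) =
        (QuatPoly.X * QuatPoly.Y - QuatPoly.Y * QuatPoly.X) *
          (QuatPoly.coeff a * QuatPoly.X + QuatPoly.coeff b * QuatPoly.Y + QuatPoly.coeff c)) ∨
      (QuatPoly.X ^ 2 * QuatPoly.Y + QuatPoly.Y ^ 2 * QuatPoly.X -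
          2 * (QuatPoly.X * QuatPoly.Y * QuatPoly.X) =
        (QuatPoly.coeff a * QuatPoly.X + QuatPoly.coeff b * QuatPoly.Y + QuatPoly.coeff c) *
          (QuatPoly.X * QuatPoly.Y - QuatPoly.Y * QuatPoly.X)) := by
  rintro ⟨a, b, c, h | h⟩
  all_goals
    have h2 := congrArg evalOneTwo h
    have hX : evalOneTwo (QuatPoly.X ^ 2) = 1 := by
      rw [pow_two, map_mul, evalOneTwo_X, one_mul]
    have hY : evalOneTwo (QuatPoly.Y ^ 2) = 2 ^ 2 := by
      rw [pow_two, map_mul, evalOneTwo_Y, pow_two]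
    have h3 : evalOneTwo 2 = 2 := map_ofNat evalOneTwo 2
    simp only [map_add, map_sub, map_mul, hX, hY, h3, evalOneTwo_X, evalOneTwo_Y,
      one_mul, mul_one, sub_self, zero_mul, mul_zero] at h2
    norm_num at h2
    have h4 : ((2 : ℝ) : Quaternion ℝ) = ((0 : ℝ) : Quaternion ℝ) := h2
    exact two_ne_zero (Quaternion.coe_injective h4)
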